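/- Let G and H be finite simple graphs with 2 ≤ p(G) ≤ |V(H)| ≤ |V(G)| such that G is connected, H has no isolated vertices, and H has a connected component with at least 3 vertices. Then there exists an injective map φ : V(H) → V(G) such that the superposition F = G ⊕_φ H is edge 2-connected. -/

import Mathlib

open SimpleGraph

/-- The superposition `G ⊕_φ H` of `G` and `H` with respect to an injective map
`φ : V(H) ↪ V(G)`. -/
def superpose {α β : Type*} (G : SimpleGraph α) (H : SimpleGraph β) (φ : β ↪ α) :
    SimpleGraph α :=
  G ⊔ SimpleGraph.map φ H

/-- A graph is edge 2-connected if it is connected and has no bridge. -/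
def TwoEdgeConnected {α : Type*} (G : SimpleGraph α) : Prop :=
  G.Connected ∧ ∀ e : Sym2 α, ¬ G.IsBridge e

/-- The graph obtained from `G` by deleting all its bridges; its connected
components are the biconnected components of `G`. -/
def bicompGraph {α : Type*} (G : SimpleGraph α) : SimpleGraph α :=
  G.deleteEdges {e | G.IsBridge e}

/-- A biconnected component `C` of `G` is pendant if exactly one bridge of `G` has an
endpoint in `C`. -/
def IsPendant {α : Type*} (G : SimpleGraph α)
    (C : (bicompGraph G).ConnectedComponent) : Prop :=
  ∃! e : Sym2 α, G.IsBridge e ∧ ∃ v ∈ C.supp, v ∈ e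

/-- `p(G)`: the number of pendant biconnected components of `G`. -/
noncomputable def numPendant {α : Type*} (G : SimpleGraph α) : ℕ :=
  {C : (bicompGraph G).ConnectedComponent | IsPendant G C}.ncard

/-!
A map `φ` makes `G ⊕_φ H` edge 2-connected as soon as every bridge `e` of `G` is *covered*: some
edge of `H` joins the two sides of `e` and is not itself placed on a bridge. Such a `φ` is reached
by repeatedly exchanging the images of two vertices of `H`, in three rounds, starting from a `φ`
whose range meets every pendant component and hence both sides of every bridge.

1. If no edge of `H` crosses the bridge `ab`, exchange a vertex placed on the side of `a` with one
   placed on the side of `b`. Afterwards `ab` is crossed, and every bridge crossed before still is.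
2. If an edge that forms a component of `H` is placed on a bridge, pick a vertex `z` in a larger
   component and exchange it with the endpoint of the edge lying on the same side of the bridge.
   The edge then leaves the bridge, and every bridge crossed before still is.
3. If a crossed bridge is not covered, the only edge `xy` crossing it is placed on it, and `x` or
   `y` has another neighbour. Exchanging `x` and `y` makes all other edges at `x` and `y` cross the
   bridge. None of them is then placed on a bridge, so no bridge stops being covered.
-/

section Sides

variable {α : Type*} {G : SimpleGraph α} {e e' : Sym2 α} {a b c d u v w : α}

/-- `u` and `v` lie on the same side of `e`: they are joined by a walk of `G` avoiding `e`. When `e`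
is a bridge of a connected graph there are exactly two sides. -/
abbrev SameSide (G : SimpleGraph α) (e : Sym2 α) (u v : α) : Prop :=
  (G.deleteEdges {e}).Reachable u v

lemma sameSide_of_adj (h : G.Adj u v) (hne : s(u, v) ≠ e) : SameSide G e u v :=
  Adj.reachable <| by simpa [h] using hne

lemma sameSide_of_isBridge (hG : G.Preconnected) (h : G.IsBridge s(u, v)) (hne : s(u, v) ≠ e) :
    SameSide G e u v :=
  sameSide_of_adj (h.reachable_iff_adj.1 (hG u v)) hne

lemma sameSide_left_or_right (hG : G.Preconnected) (a b w : α) :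
    SameSide G s(a, b) a w ∨ SameSide G s(a, b) b w := by
  obtain ⟨p⟩ := hG w a
  induction p with
  | nil => exact .inl .rfl
  | @cons u v a huv _ ih =>
    by_cases he : s(u, v) = s(a, b)
    · obtain ⟨rfl, -⟩ | ⟨rfl, -⟩ := Sym2.eq_iff.1 he
      exacts [.inl .rfl, .inr .rfl]
    · have hvu := (sameSide_of_adj huv he).symm
      exact ih.imp (·.trans hvu) (·.trans hvu)

lemma sameSide_or_sameSide (hG : G.Preconnected) (h : ¬ SameSide G e u v) (w : α) :
    SameSide G e u w ∨ SameSide G e v w := by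
  induction e with
  | h a b =>
    obtain hu | hu := sameSide_left_or_right hG a b u <;>
      obtain hv | hv := sameSide_left_or_right hG a b v
    · exact absurd (hu.symm.trans hv) h
    · exact (sameSide_left_or_right hG a b w).imp hu.symm.trans hv.symm.trans
    · exact (sameSide_left_or_right hG a b w).symm.imp hu.symm.trans hv.symm.trans
    · exact absurd (hu.symm.trans hv) h

lemma SameSide.of_mem (h : SameSide G e u v) (h' : ¬ SameSide G e' u v) (hc : c ∈ e') :
    SameSide G e c v := by
  classical
  obtain ⟨p⟩ := h
  have he' : e' ∈ p.edges := by
    by_contra hp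
    exact h' ((p.toDeleteEdge e' hp).reachable.mono (deleteEdges_mono (deleteEdges_le _)))
  exact (p.dropUntil c (p.mem_support_of_mem_edges he' hc)).reachable

lemma sameSide_or_of_isBridge (h : G.IsBridge s(a, b)) (hu : SameSide G s(a, b) a u)
    (hv : SameSide G s(a, b) b v) (e' : Sym2 α) : SameSide G e' a u ∨ SameSide G e' b v := by
  by_contra! hcon
  have hc : e'.out.1 ∈ e' := e'.out_fst_mem
  exact h (hu.trans ((hu.of_mem hcon.1 hc).symm.trans ((hv.of_mem hcon.2 hc).trans hv.symm)))

end Sides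

section Pendant

variable {α : Type*} {G : SimpleGraph α} {a b c d u v : α}

lemma sameSide_of_reachable_bicompGraph {e : Sym2 α} (he : G.IsBridge e)
    (h : (bicompGraph G).Reachable u v) : SameSide G e u v :=
  h.mono (deleteEdges_anti (by simpa using he))

lemma setOf_sameSide_ssubset (hG : G.Preconnected) (hab : G.IsBridge s(a, b))
    (hcd : G.IsBridge s(c, d)) (hne : s(c, d) ≠ s(a, b)) (hbc : (bicompGraph G).Reachable b c) :
    {w | SameSide G s(c, d) d w} ⊂ {w | SameSide G s(a, b) b w} := by
  have hcb : SameSide G s(c, d) c b := (sameSide_of_reachable_bicompGraph hcd hbc).symm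
  have hbd : SameSide G s(a, b) b d :=
    (sameSide_of_reachable_bicompGraph hab hbc).trans (sameSide_of_isBridge hG hcd hne)
  refine ⟨fun w hdw => ?_, fun hsub => ?_⟩
  · refine hbd.trans ?_
    by_contra hdw'
    have hbw : SameSide G s(c, d) b w := SameSide.of_mem hdw hdw' (Sym2.mem_mk_right a b)
    exact hcd (hcb.trans (hbw.trans hdw.symm))
  · have hdb : SameSide G s(c, d) d b := hsub Reachable.rfl
    exact hcd (hcb.trans hdb.symm)

lemma exists_isBridge_ne_of_not_isPendant (h : G.IsBridge s(a, b))
    (hp : ¬ IsPendant G ((bicompGraph G).connectedComponentMk b)) :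
    ∃ c d, (bicompGraph G).Reachable b c ∧ G.IsBridge s(c, d) ∧ s(c, d) ≠ s(a, b) := by
  contrapose! hp
  refine ⟨s(a, b), ⟨h, b, rfl, Sym2.mem_mk_right a b⟩, ?_⟩
  rintro e ⟨he, c, hc, hce⟩
  obtain ⟨d, rfl⟩ := Sym2.mem_iff_exists.1 hce
  exact hp c d (ConnectedComponent.exact hc).symm he

lemma exists_isPendant_sameSide [Finite α] (hG : G.Preconnected) (h : G.IsBridge s(a, b)) :
    ∃ C, IsPendant G C ∧ ∀ v ∈ C.supp, SameSide G s(a, b) b v := by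
  induction hS : {w | SameSide G s(a, b) b w} using WellFoundedLT.induction
    generalizing a b with
  | ind S ih =>
    subst hS
    by_cases hp : IsPendant G ((bicompGraph G).connectedComponentMk b)
    · exact ⟨_, hp, fun v hv =>
        sameSide_of_reachable_bicompGraph h (ConnectedComponent.exact hv).symm⟩
    · obtain ⟨c, d, hbc, hcd, hne⟩ := exists_isBridge_ne_of_not_isPendant h hp
      have hlt := setOf_sameSide_ssubset hG h hcd hne hbc
      obtain ⟨C, hC, hCd⟩ := ih _ hlt hcd rfl
      exact ⟨C, hC, fun v hv => hlt.subset (hCd v hv)⟩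

/-- `s` meets both sides of every bridge of `G`; the side of `a` is obtained by writing the bridge
as `s(b, a)`. -/
def MeetsSides (G : SimpleGraph α) (s : Set α) : Prop :=
  ∀ ⦃a b⦄, G.IsBridge s(a, b) → ∃ v ∈ s, SameSide G s(a, b) b v

lemma exists_meetsSides_ncard_le [Finite α] (hG : G.Preconnected) :
    ∃ s, MeetsSides G s ∧ s.ncard ≤ numPendant G := by
  refine ⟨Quot.out '' {C | IsPendant G C}, fun a b h => ?_, Set.ncard_image_le (Set.toFinite _)⟩
  obtain ⟨C, hC, hCb⟩ := exists_isPendant_sameSide hG h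
  exact ⟨C.out, ⟨C, hC, rfl⟩, hCb _ (Quot.out_eq C)⟩

lemma exists_embedding_subset_range {β : Type*} [Fintype α] [Fintype β] {s : Set α}
    (hs : s.ncard ≤ Fintype.card β) (hcard : Fintype.card β ≤ Fintype.card α) :
    ∃ φ : β ↪ α, s ⊆ Set.range φ := by
  classical
  rw [Set.ncard_eq_toFinset_card'] at hs
  obtain ⟨t, hst, ht⟩ := Finset.exists_superset_card_eq hs hcard
  obtain ⟨φ, hφ⟩ := Function.Embedding.exists_of_card_eq_finset ht.symm
  refine ⟨φ, fun v hv => ?_⟩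
  have hvφ : v ∈ Finset.univ.map φ := hφ ▸ hst (Set.mem_toFinset.2 hv)
  simpa using hvφ

lemma exists_embedding_meetsSides {β : Type*} [Fintype α] [Fintype β] (hG : G.Preconnected)
    (hpc : numPendant G ≤ Fintype.card β) (hcard : Fintype.card β ≤ Fintype.card α) :
    ∃ φ : β ↪ α, MeetsSides G (Set.range φ) := by
  obtain ⟨s, hs, hsp⟩ := exists_meetsSides_ncard_le hG
  obtain ⟨φ, hφ⟩ := exists_embedding_subset_range (hsp.trans hpc) hcard
  refine ⟨φ, fun a b h => ?_⟩
  obtain ⟨v, hv, hbv⟩ := hs h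
  exact ⟨v, hφ hv, hbv⟩

end Pendant

section Crossing

variable {α β : Type*} {G : SimpleGraph α} {H : SimpleGraph β} {φ : β ↪ α} {e : Sym2 α}

/-- Some edge of `H`, placed by `φ`, joins the two sides of `e`. -/
def IsCrossed (G : SimpleGraph α) (H : SimpleGraph β) (φ : β ↪ α) (e : Sym2 α) : Prop :=
  ∃ x y, H.Adj x y ∧ ¬ SameSide G e (φ x) (φ y)

/-- Some edge of `H` crosses `e` without being placed on a bridge of `G`. For a bridge `e` it is
equivalent to ask that the edge not be placed on `e` itself, because the endpoints of a bridge lie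
on the same side of any other bridge. -/
def IsCovered (G : SimpleGraph α) (H : SimpleGraph β) (φ : β ↪ α) (e : Sym2 α) : Prop :=
  ∃ x y, H.Adj x y ∧ ¬ SameSide G e (φ x) (φ y) ∧ ¬ G.IsBridge s(φ x, φ y)

lemma twoEdgeConnected_superpose (hG : G.Connected)
    (h : ∀ e, G.IsBridge e → IsCovered G H φ e) : TwoEdgeConnected (superpose G H φ) := by
  have hle : G ≤ superpose G H φ := le_sup_left
  refine ⟨hG.mono hle, fun e he => ?_⟩
  obtain ⟨x, y, hxy, hsep, hnb⟩ := h e (he.anti hle)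
  have hadj : (superpose G H φ).Adj (φ x) (φ y) := .inr (map_adj_apply.2 hxy)
  have hφxy : SameSide (superpose G H φ) e (φ x) (φ y) :=
    sameSide_of_adj hadj fun hφe => hnb (hφe ▸ he.anti hle)
  have hall (w : α) : SameSide (superpose G H φ) e (φ x) w :=
    (sameSide_or_sameSide hG.preconnected hsep w).elim (·.mono (deleteEdges_mono hle))
      fun hyw => hφxy.trans (hyw.mono (deleteEdges_mono hle))
  induction e with
  | h a b => exact he ((hall a).symm.trans (hall b))

lemma exists_forall_of_forall_repair {ι Φ : Type*} [Finite ι] {V : Φ → Prop} {P : Φ → ι → Prop}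
    (hrepair : ∀ φ i, V φ → ¬ P φ i → ∃ ψ, V ψ ∧ P ψ i ∧ ∀ j, P φ j → P ψ j)
    (hV : ∃ φ, V φ) : ∃ φ, V φ ∧ ∀ i, P φ i := by
  obtain ⟨φ, hφ, hmax⟩ := exists_maximalFor_of_wellFoundedGT V (fun φ => {i | P φ i}) hV
  refine ⟨φ, hφ, fun i => ?_⟩
  by_contra hi
  obtain ⟨ψ, hψ, hψi, hle⟩ := hrepair φ i hφ hi
  exact hi (hmax hψ hle hψi)

end Crossing

section Exchange

variable {α β : Type*} [DecidableEq β] {G : SimpleGraph α} {H : SimpleGraph β} {φ : β ↪ α}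
  {e : Sym2 α} {x y z s t : β}

/-- `φ` with the images of `x` and `y` exchanged. -/
def exchange (φ : β ↪ α) (x y : β) : β ↪ α :=
  (Equiv.swap x y).toEmbedding.trans φ

@[simp] lemma exchange_left (φ : β ↪ α) (x y : β) : exchange φ x y x = φ y := by
  simp [exchange]

@[simp] lemma exchange_right (φ : β ↪ α) (x y : β) : exchange φ x y y = φ x := by
  simp [exchange]

lemma exchange_of_ne (φ : β ↪ α) (hx : t ≠ x) (hy : t ≠ y) : exchange φ x y t = φ t := by
  simp [exchange, Equiv.swap_apply_of_ne_of_ne hx hy]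

lemma range_exchange (φ : β ↪ α) (x y : β) : Set.range (exchange φ x y) = Set.range φ :=
  (Equiv.swap x y).surjective.range_comp φ

lemma sameSide_exchange (h : SameSide G e (φ x) (φ y)) (t : β) :
    SameSide G e (exchange φ x y t) (φ t) := by
  by_cases hx : t = x
  · simpa [hx] using h.symm
  by_cases hy : t = y
  · simpa [hy] using h
  rw [exchange_of_ne φ hx hy]

lemma IsCrossed.exchange_of_sameSide (hc : IsCrossed G H φ e) (h : SameSide G e (φ x) (φ y)) :
    IsCrossed G H (exchange φ x y) e := by
  obtain ⟨s, t, hst, hsep⟩ := hc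
  exact ⟨s, t, hst, fun hst' =>
    hsep ((sameSide_exchange h s).symm.trans (hst'.trans (sameSide_exchange h t)))⟩

end Exchange

section CrossEveryBridge

variable {α β : Type*} {G : SimpleGraph α} {H : SimpleGraph β} {φ : β ↪ α} {a b : α}
  {p q p' q' : β}

lemma sameSide_of_not_isCrossed {e : Sym2 α} {x y : β} (h : ¬ IsCrossed G H φ e)
    (hxy : H.Adj x y) : SameSide G e (φ x) (φ y) := by
  by_contra hsep
  exact h ⟨x, y, hxy, hsep⟩

lemma isCrossed_exchange [DecidableEq β] (hG : G.Preconnected)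
    (hab : G.IsBridge s(a, b)) (hno : ¬ IsCrossed G H φ s(a, b))
    (hp : SameSide G s(a, b) a (φ p)) (hq : SameSide G s(a, b) b (φ q))
    (hpp' : H.Adj p p') (hqq' : H.Adj q q') :
    IsCrossed G H (exchange φ p q) s(a, b) ∧
      ∀ e', IsCrossed G H φ e' → IsCrossed G H (exchange φ p q) e' := by
  have hp' : SameSide G s(a, b) a (φ p') := hp.trans (sameSide_of_not_isCrossed hno hpp')
  have hq' : SameSide G s(a, b) b (φ q') := hq.trans (sameSide_of_not_isCrossed hno hqq')
  have hp'q : p' ≠ q := by rintro rfl; exact hab (hp'.trans hq.symm)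
  have hq'p : q' ≠ p := by rintro rfl; exact hab (hp.trans hq'.symm)
  have hψp' : exchange φ p q p' = φ p' := exchange_of_ne φ hpp'.ne' hp'q
  have hψq' : exchange φ p q q' = φ q' := exchange_of_ne φ hq'p hqq'.ne'
  constructor
  · refine ⟨p, p', hpp', fun hψ => hab ?_⟩
    rw [exchange_left, hψp'] at hψ
    exact hp'.trans (hψ.symm.trans hq.symm)
  · intro e' hc
    have hne : s(a, b) ≠ e' := by rintro rfl; exact hno hc
    have hab' : SameSide G e' a b := sameSide_of_isBridge hG hab hne
    by_cases hpq : SameSide G e' (φ p) (φ q)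
    · exact hc.exchange_of_sameSide hpq
    by_contra hno'
    have hqp' : SameSide G e' (φ q) (φ p') := by
      simpa [hψp'] using sameSide_of_not_isCrossed hno' hpp'
    have hpq' : SameSide G e' (φ p) (φ q') := by
      simpa [hψq'] using sameSide_of_not_isCrossed hno' hqq'
    have hap : SameSide G e' a (φ p) := (sameSide_or_of_isBridge hab hp hq' e').elim id
      fun h => hab'.trans (h.trans hpq'.symm)
    have haq : SameSide G e' a (φ q) := (sameSide_or_of_isBridge hab hp' hq e').elim
      (·.trans hqp'.symm) hab'.trans
    exact hpq (hap.symm.trans haq)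

theorem exists_forall_isCrossed [Finite α] (hG : G.Preconnected) (hiso : ∀ x, ∃ y, H.Adj x y)
    (hφ : ∃ φ : β ↪ α, MeetsSides G (Set.range φ)) :
    ∃ φ : β ↪ α, ∀ e, G.IsBridge e → IsCrossed G H φ e := by
  classical
  suffices ∃ φ : β ↪ α, MeetsSides G (Set.range φ) ∧ ∀ e, G.IsBridge e → IsCrossed G H φ e from
    this.imp fun _ => And.right
  refine exists_forall_of_forall_repair (fun φ e hφ hno => ?_) hφ
  obtain ⟨he, hno⟩ := Classical.not_imp.1 hno
  induction e with
  | h a b =>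
    obtain ⟨_, ⟨q, rfl⟩, hq⟩ := hφ he
    obtain ⟨_, ⟨p, rfl⟩, hp⟩ := hφ (Sym2.eq_swap ▸ he)
    obtain ⟨p', hpp'⟩ := hiso p
    obtain ⟨q', hqq'⟩ := hiso q
    rw [Sym2.eq_swap] at hp
    obtain ⟨hcross, hkeep⟩ := isCrossed_exchange hG he hno hp hq hpp' hqq'
    exact ⟨exchange φ p q, by rwa [range_exchange], fun _ => hcross,
      fun e' h he' => hkeep e' (h he')⟩

end CrossEveryBridge

section IsolatedEdges

variable {α β : Type*} {G : SimpleGraph α} {H : SimpleGraph β} {φ : β ↪ α} {x y z : β}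

/-- The edge `xy` is a connected component of `H`. -/
def IsIsolatedEdge (H : SimpleGraph β) (x y : β) : Prop :=
  H.neighborSet x = {y} ∧ H.neighborSet y = {x}

lemma IsIsolatedEdge.symm (h : IsIsolatedEdge H x y) : IsIsolatedEdge H y x :=
  And.symm h

lemma IsIsolatedEdge.adj_iff (h : IsIsolatedEdge H x y) : H.Adj x z ↔ z = y := by
  rw [← mem_neighborSet, h.1, Set.mem_singleton_iff]

lemma IsIsolatedEdge.eq_or_eq_of_reachable (h : IsIsolatedEdge H x y) (hxz : H.Reachable x z) :
    z = x ∨ z = y := by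
  obtain ⟨p⟩ := hxz
  induction p generalizing y with
  | nil => exact .inl rfl
  | cons hadj _ ih =>
    obtain rfl := h.adj_iff.1 hadj
    exact (ih h.symm).symm

lemma exists_forall_not_isIsolatedEdge
    (h3 : ∃ x y z : β, x ≠ y ∧ x ≠ z ∧ y ≠ z ∧ H.Reachable x y ∧ H.Reachable x z) :
    ∃ z, ∀ x, ¬ IsIsolatedEdge H z x := by
  obtain ⟨x, y, z, hxy, hxz, hyz, hy, hz⟩ := h3
  refine ⟨x, fun w hw => hyz ?_⟩
  have hyw : y = w := (hw.eq_or_eq_of_reachable hy).resolve_left hxy.symm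
  have hzw : z = w := (hw.eq_or_eq_of_reachable hz).resolve_left hxz.symm
  exact hyw.trans hzw.symm

/-- No connected component of `H` consisting of a single edge is placed on a bridge of `G`. -/
def AvoidsIsolatedEdges (G : SimpleGraph α) (H : SimpleGraph β) (φ : β ↪ α) : Prop :=
  ∀ x y, IsIsolatedEdge H x y → ¬ G.IsBridge s(φ x, φ y)

lemma not_isBridge_of_sameSide (hG : G.Preconnected) (he : G.IsBridge s(φ x, φ y)) (hzy : z ≠ y)
    (hside : SameSide G s(φ x, φ y) (φ y) (φ z)) : ¬ G.IsBridge s(φ x, φ z) := by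
  intro hxz
  have hne : s(φ x, φ z) ≠ s(φ x, φ y) := fun h => hzy (φ.injective (Sym2.congr_right.1 h))
  exact he ((sameSide_of_isBridge hG hxz hne).trans hside.symm)

lemma IsCrossed.exchange_of_adj [DecidableEq β] (hG : G.Preconnected) (hxy : H.Adj x y)
    (he : G.IsBridge s(φ x, φ y)) (hzx : z ≠ x)
    (hside : SameSide G s(φ x, φ y) (φ y) (φ z)) {e' : Sym2 α} (hc : IsCrossed G H φ e') :
    IsCrossed G H (exchange φ y z) e' := by
  by_cases hyz : SameSide G e' (φ y) (φ z)
  · exact hc.exchange_of_sameSide hyz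
  have hne : s(φ x, φ y) ≠ e' := by rintro rfl; exact hyz hside
  refine ⟨x, y, hxy, fun hxz => hyz ?_⟩
  rw [exchange_of_ne φ hxy.ne hzx.symm, exchange_left] at hxz
  exact (sameSide_of_isBridge hG he hne).symm.trans hxz

lemma not_isBridge_exchange_of_isIsolatedEdge [DecidableEq β] (hG : G.Preconnected)
    (hxy : IsIsolatedEdge H x y) (he : G.IsBridge s(φ x, φ y)) (hz : ∀ t, ¬ IsIsolatedEdge H z t)
    (hside : SameSide G s(φ x, φ y) (φ y) (φ z)) {s t : β} (hst : IsIsolatedEdge H s t)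
    (hb : G.IsBridge s(φ s, φ t) → s = x ∧ t = y) :
    ¬ G.IsBridge s(exchange φ y z s, exchange φ y z t) := by
  have hzx : z ≠ x := by rintro rfl; exact hz y hxy
  have hzy : z ≠ y := by rintro rfl; exact hz x hxy.symm
  have hxz := not_isBridge_of_sameSide hG he hzy hside
  have hψx : exchange φ y z x = φ x := exchange_of_ne φ (hxy.adj_iff.2 rfl).ne hzx.symm
  have hsz : s ≠ z := by rintro rfl; exact hz t hst
  have htz : t ≠ z := by rintro rfl; exact hz s hst.symm
  by_cases hsy : s = y
  · subst hsy
    obtain rfl : t = x := hxy.symm.adj_iff.1 (hst.adj_iff.2 rfl)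
    rwa [hψx, exchange_left, Sym2.eq_swap]
  by_cases hty : t = y
  · subst hty
    obtain rfl : s = x := hxy.symm.adj_iff.1 (hst.symm.adj_iff.2 rfl)
    rwa [hψx, exchange_left]
  rw [exchange_of_ne φ hsy hsz, exchange_of_ne φ hty htz]
  exact fun h => hty (hb h).2

theorem exists_isCrossed_avoidsIsolatedEdges [Finite β] (hG : G.Preconnected)
    (hz : ∃ z, ∀ t, ¬ IsIsolatedEdge H z t)
    (hφ : ∃ φ : β ↪ α, ∀ e, G.IsBridge e → IsCrossed G H φ e) :
    ∃ φ : β ↪ α, (∀ e, G.IsBridge e → IsCrossed G H φ e) ∧ AvoidsIsolatedEdges G H φ := by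
  classical
  obtain ⟨z, hz⟩ := hz
  suffices ∃ φ : β ↪ α, (∀ e, G.IsBridge e → IsCrossed G H φ e) ∧
      ∀ i : β × β, IsIsolatedEdge H i.1 i.2 → ¬ G.IsBridge s(φ i.1, φ i.2) from
    this.imp fun _ => And.imp_right fun h x y => h (x, y)
  refine exists_forall_of_forall_repair ?_ hφ
  rintro φ ⟨x, y⟩ hcr hbad
  obtain ⟨hxy, he⟩ : IsIsolatedEdge H x y ∧ G.IsBridge s(φ x, φ y) := by simpa using hbad
  clear hbad
  wlog hside : SameSide G s(φ x, φ y) (φ y) (φ z) generalizing x y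
  · have hside' := (sameSide_or_sameSide hG he (φ z)).resolve_right hside
    rw [Sym2.eq_swap] at he hside'
    obtain ⟨ψ, hψ, hyx, hkeep⟩ := this y x hxy.symm he hside'
    exact ⟨ψ, hψ, fun _ => Sym2.eq_swap ▸ hyx hxy.symm, hkeep⟩
  have hzx : z ≠ x := by rintro rfl; exact hz y hxy
  have hoff {s t : β} :=
    not_isBridge_exchange_of_isIsolatedEdge hG hxy he hz hside (s := s) (t := t)
  exact ⟨exchange φ y z,
    fun e' he' => (hcr e' he').exchange_of_adj hG (hxy.adj_iff.2 rfl) he hzx hside,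
    fun _ => hoff hxy fun _ => ⟨rfl, rfl⟩,
    fun _ hj hst => hoff hst fun h => absurd h (hj hst)⟩

end IsolatedEdges

section CoverEveryBridge

variable {α β : Type*} {G : SimpleGraph α} {H : SimpleGraph β} {φ : β ↪ α} {e : Sym2 α}
  {x y s t : β}

lemma sameSide_of_not_isCovered (hG : G.Preconnected) (hno : ¬ IsCovered G H φ e)
    (hst : H.Adj s t) (hne : s(φ s, φ t) ≠ e) : SameSide G e (φ s) (φ t) := by
  by_contra hsep
  exact hno ⟨s, t, hst, hsep, fun hb => hsep (sameSide_of_isBridge hG hb hne)⟩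

lemma exists_adj_eq_of_isCrossed_of_not_isCovered (hG : G.Preconnected)
    (hc : IsCrossed G H φ e) (hno : ¬ IsCovered G H φ e) :
    ∃ x y, H.Adj x y ∧ s(φ x, φ y) = e := by
  obtain ⟨x, y, hxy, hsep⟩ := hc
  exact ⟨x, y, hxy, by_contra fun hne => hsep (sameSide_of_not_isCovered hG hno hxy hne)⟩

lemma not_sameSide_of_adj_of_not_isCovered (hG : G.Preconnected) (he : G.IsBridge s(φ x, φ y))
    (hno : ¬ IsCovered G H φ s(φ x, φ y)) (hyt : H.Adj y t) (htx : t ≠ x) :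
    ¬ SameSide G s(φ x, φ y) (φ x) (φ t) := by
  have hne : s(φ y, φ t) ≠ s(φ x, φ y) := by
    rw [Sym2.eq_swap]
    exact fun h => htx (φ.injective (Sym2.congr_left.1 h))
  exact fun hxt => he (hxt.trans (sameSide_of_not_isCovered hG hno hyt hne).symm)

lemma not_isBridge_of_adj_of_not_isCovered (hG : G.Preconnected) (he : G.IsBridge s(φ x, φ y))
    (hno : ¬ IsCovered G H φ s(φ x, φ y)) (hyt : H.Adj y t) (htx : t ≠ x) :
    ¬ G.IsBridge s(φ x, φ t) := by
  have hne : s(φ x, φ t) ≠ s(φ x, φ y) :=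
    fun h => hyt.ne' (φ.injective (Sym2.congr_right.1 h))
  exact fun h => not_sameSide_of_adj_of_not_isCovered hG he hno hyt htx
    (sameSide_of_isBridge hG h hne)

lemma not_isBridge_exchange_of_not_isCovered [DecidableEq β] (hG : G.Preconnected)
    (he : G.IsBridge s(φ x, φ y)) (hno : ¬ IsCovered G H φ s(φ x, φ y))
    (hst : H.Adj s t) (hb : ¬ G.IsBridge s(φ s, φ t)) :
    ¬ G.IsBridge s(exchange φ x y s, exchange φ x y t) := by
  have hx {t : β} (hxt : H.Adj x t) (hb : ¬ G.IsBridge s(φ x, φ t)) :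
      ¬ G.IsBridge s(φ y, exchange φ x y t) := by
    have hty : t ≠ y := by rintro rfl; exact hb he
    rw [exchange_of_ne φ hxt.ne' hty]
    rw [Sym2.eq_swap] at he hno
    exact not_isBridge_of_adj_of_not_isCovered hG he hno hxt hty
  have hy {t : β} (hyt : H.Adj y t) (hb : ¬ G.IsBridge s(φ y, φ t)) :
      ¬ G.IsBridge s(φ x, exchange φ x y t) := by
    have htx : t ≠ x := by rintro rfl; exact hb (Sym2.eq_swap ▸ he)
    rw [exchange_of_ne φ htx hyt.ne']
    exact not_isBridge_of_adj_of_not_isCovered hG he hno hyt htx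
  by_cases hs : s = x ∨ s = y
  · obtain rfl | rfl := hs
    · simpa only [exchange_left] using hx hst hb
    · simpa only [exchange_right] using hy hst hb
  by_cases ht : t = x ∨ t = y
  · rw [Sym2.eq_swap] at hb ⊢
    obtain rfl | rfl := ht
    · simpa only [exchange_left] using hx hst.symm hb
    · simpa only [exchange_right] using hy hst.symm hb
  push Not at hs ht
  rwa [exchange_of_ne φ hs.1 hs.2, exchange_of_ne φ ht.1 ht.2]

lemma isCovered_exchange_self [DecidableEq β] (hG : G.Preconnected) (he : G.IsBridge s(φ x, φ y))
    (hno : ¬ IsCovered G H φ s(φ x, φ y)) (hyt : H.Adj y t) (htx : t ≠ x) :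
    IsCovered G H (exchange φ x y) s(φ x, φ y) := by
  refine ⟨y, t, hyt, ?_⟩
  rw [exchange_right, exchange_of_ne φ htx hyt.ne']
  exact ⟨not_sameSide_of_adj_of_not_isCovered hG he hno hyt htx,
    not_isBridge_of_adj_of_not_isCovered hG he hno hyt htx⟩

lemma IsCovered.exchange_of_not_isCovered [DecidableEq β] (hG : G.Preconnected)
    (he : G.IsBridge s(φ x, φ y)) (hno : ¬ IsCovered G H φ s(φ x, φ y))
    (hc : IsCovered G H φ e) : IsCovered G H (exchange φ x y) e := by
  have hne : s(φ x, φ y) ≠ e := by rintro rfl; exact hno hc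
  have hxy : SameSide G e (φ x) (φ y) := sameSide_of_isBridge hG he hne
  obtain ⟨s, t, hst, hsep, hb⟩ := hc
  exact ⟨s, t, hst, fun h =>
    hsep ((sameSide_exchange hxy s).symm.trans (h.trans (sameSide_exchange hxy t))),
    not_isBridge_exchange_of_not_isCovered hG he hno hst hb⟩

lemma exists_adj_ne_of_not_isIsolatedEdge (hxy : H.Adj x y) (h : ¬ IsIsolatedEdge H x y) :
    (∃ t, H.Adj x t ∧ t ≠ y) ∨ ∃ t, H.Adj y t ∧ t ≠ x := by
  contrapose! h
  exact ⟨Set.eq_singleton_iff_unique_mem.2 ⟨hxy, h.1⟩,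
    Set.eq_singleton_iff_unique_mem.2 ⟨hxy.symm, h.2⟩⟩

theorem exists_forall_isCovered [Finite α] (hG : G.Preconnected)
    (hφ : ∃ φ : β ↪ α, (∀ e, G.IsBridge e → IsCrossed G H φ e) ∧ AvoidsIsolatedEdges G H φ) :
    ∃ φ : β ↪ α, ∀ e, G.IsBridge e → IsCovered G H φ e := by
  classical
  suffices ∃ φ : β ↪ α, ((∀ e, G.IsBridge e → IsCrossed G H φ e) ∧ AvoidsIsolatedEdges G H φ) ∧
      ∀ e, G.IsBridge e → IsCovered G H φ e from this.imp fun _ => And.right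
  refine exists_forall_of_forall_repair ?_ hφ
  rintro φ e ⟨hcr, hav⟩ hbad
  obtain ⟨he, hno⟩ := Classical.not_imp.1 hbad
  obtain ⟨x, y, hxy, rfl⟩ := exists_adj_eq_of_isCrossed_of_not_isCovered hG (hcr _ he) hno
  clear hbad
  wlog hy : ∃ t, H.Adj y t ∧ t ≠ x generalizing x y
  · have hx := (exists_adj_ne_of_not_isIsolatedEdge hxy fun h => hav x y h he).resolve_right hy
    rw [Sym2.eq_swap] at he hno ⊢
    exact this y x hxy.symm he hno hx
  obtain ⟨t, hyt, htx⟩ := hy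
  have hself := isCovered_exchange_self hG he hno hyt htx
  refine ⟨exchange φ x y, ⟨fun e' he' => ?_, fun s t hst => ?_⟩, fun _ => hself,
    fun e' hc he' => (hc he').exchange_of_not_isCovered hG he hno⟩
  · by_cases hee' : s(φ x, φ y) = e'
    · obtain ⟨s, t, hst, hsep, -⟩ := hee' ▸ hself
      exact ⟨s, t, hst, hsep⟩
    · exact (hcr e' he').exchange_of_sameSide (sameSide_of_isBridge hG he hee')
  · exact not_isBridge_exchange_of_not_isCovered hG he hno (hst.adj_iff.2 rfl) (hav s t hst)

end CoverEveryBridge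

/-- Let `G` be connected with `2 ≤ p(G) ≤ |V(H)| ≤ |V(G)|`, let `H` have no isolated
vertices and have a connected component with at least 3 vertices. Then there is an
injective `φ : V(H) ↪ V(G)` such that `F = G ⊕_φ H` is edge 2-connected. -/
theorem stmt15 {α β : Type*} [Fintype α] [Fintype β]
    (G : SimpleGraph α) (hG : G.Connected) (H : SimpleGraph β)
    (h2 : 2 ≤ numPendant G) (hpc : numPendant G ≤ Fintype.card β)
    (hcard : Fintype.card β ≤ Fintype.card α)
    (hiso : ∀ x : β, ∃ y : β, H.Adj x y)
    (h3 : ∃ x y z : β, x ≠ y ∧ x ≠ z ∧ y ≠ z ∧ H.Reachable x y ∧ H.Reachable x z) :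
    ∃ φ : β ↪ α, TwoEdgeConnected (superpose G H φ) := by
  obtain ⟨φ, hφ⟩ : ∃ φ : β ↪ α, ∀ e, G.IsBridge e → IsCovered G H φ e := by
    apply exists_forall_isCovered hG.preconnected
    apply exists_isCrossed_avoidsIsolatedEdges hG.preconnected (exists_forall_not_isIsolatedEdge h3)
    apply exists_forall_isCrossed hG.preconnected hiso
    exact exists_embedding_meetsSides hG.preconnected hpc hcard
  exact ⟨φ, twoEdgeConnected_superpose hG hφ⟩
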